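/- arXiv:math/0508532 — 7 statements merged into one kernel-verified Lean document; each statement's English description precedes it below -/
import Mathlib

section
/- Let X be a set with infinitely many points and let R be an anti-symmetric cross ratio on X. Then for all pairwise distinct points ξ, ζ, η ∈ X and all points ν, ν′ ∈ X \ {ξ, ζ, η} one has R(ξ,ζ,η,ν) + R(ζ,η,ξ,ν) + R(η,ξ,ζ,ν) = R(ξ,ζ,η,ν′) + R(ζ,η,ξ,ν′) + R(η,ξ,ζ,ν′); consequently φ(ξ,η,ζ) := (1/2)(R(ξ,ζ,η,ν) + R(ζ,η,ξ,ν) + R(η,ξ,ζ,ν)) is well defined independently of the choice of ν, and if |R| ≤ M on all quadruples of pairwise distinct points then |φ(ξ,η,ζ)| ≤ 3M/2. -/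
/-- Pairwise distinctness of three points. -/
def PD3 {X : Type*} (a b c : X) : Prop := a ≠ b ∧ a ≠ c ∧ b ≠ c

/-- Pairwise distinctness of four points. -/
def PD4 {X : Type*} (a b c d : X) : Prop :=
  a ≠ b ∧ a ≠ c ∧ a ≠ d ∧ b ≠ c ∧ b ≠ d ∧ c ≠ d

/-- Pairwise distinctness of five points. -/
def PD5 {X : Type*} (a b c d e : X) : Prop :=
  a ≠ b ∧ a ≠ c ∧ a ≠ d ∧ a ≠ e ∧ b ≠ c ∧ b ≠ d ∧ b ≠ e ∧ c ≠ d ∧ c ≠ e ∧ d ≠ e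

/-- for an anti-symmetric cross ratio `R` on an infinite set `X`, the
cyclic sum `R ξ ζ η ν + R ζ η ξ ν + R η ξ ζ ν` does not depend on the auxiliary point
`ν ∉ {ξ, ζ, η}`, so `φ (ξ,η,ζ) := (1/2)` times this sum is well defined; moreover if
`|R| ≤ M` on pairwise distinct quadruples then `|φ| ≤ 3 M / 2`. -/
theorem stmt0 {X : Type*} [Infinite X] (R : X → X → X → X → ℝ)
    (hbdd : ∃ M, ∀ a b c d, PD4 a b c d → |R a b c d| ≤ M)
    (hanti1 : ∀ a b c d, PD4 a b c d → R a b c d = - R b a c d)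
    (hanti2 : ∀ a b c d, PD4 a b c d → R c d a b = - R a b c d)
    (hcoc : ∀ a b b' c d, PD5 a b b' c d → R a b c d + R b b' c d = R a b' c d)
    (hext1 : ∀ a b c, PD3 a b c → R a a b c = 0)
    (hext2 : ∀ a b c, PD3 a b c → R b c a a = 0) :
    (∀ ξ ζ η ν ν', PD3 ξ ζ η → ν ≠ ξ → ν ≠ ζ → ν ≠ η → ν' ≠ ξ → ν' ≠ ζ → ν' ≠ η →
      R ξ ζ η ν + R ζ η ξ ν + R η ξ ζ ν
        = R ξ ζ η ν' + R ζ η ξ ν' + R η ξ ζ ν') ∧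
    (∀ M, (∀ a b c d, PD4 a b c d → |R a b c d| ≤ M) →
      ∀ ξ ζ η ν, PD3 ξ ζ η → ν ≠ ξ → ν ≠ ζ → ν ≠ η →
        |(1 / 2 : ℝ) * (R ξ ζ η ν + R ζ η ξ ν + R η ξ ζ ν)| ≤ 3 * M / 2) := by
  have hc2 : ∀ a b c d e, PD5 a b c d e → R a b c d + R a b d e = R a b c e := by
    rintro a b c d e ⟨h1, h2, h3, h4, h5, h6, h7, h8, h9, h10⟩
    have k1 := hanti2 c d a b ⟨h8, h2.symm, h5.symm, h3.symm, h6.symm, h1⟩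
    have k2 := hanti2 d e a b ⟨h10, h3.symm, h6.symm, h4.symm, h7.symm, h1⟩
    have k3 := hanti2 c e a b ⟨h9, h2.symm, h5.symm, h4.symm, h7.symm, h1⟩
    have k4 := hcoc c d e a b
      ⟨h8, h9, h2.symm, h5.symm, h10, h3.symm, h6.symm, h4.symm, h7.symm, h1⟩
    linarith
  refine ⟨?_, ?_⟩
  · rintro x z y n m ⟨h1, h2, h3⟩ n1 n2 n3 m1 m2 m3
    by_cases hnm : n = m
    · rw [hnm]
    have k1 := hc2 x z y n m
      ⟨h1, h2, n1.symm, m1.symm, h3, n2.symm, m2.symm, n3.symm, m3.symm, hnm⟩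
    have k2 := hc2 z y x n m
      ⟨h3, h1.symm, n2.symm, m2.symm, h2.symm, n3.symm, m3.symm, n1.symm, m1.symm, hnm⟩
    have k3 := hc2 y x z n m
      ⟨h2.symm, h3.symm, n3.symm, m3.symm, h1, n1.symm, m1.symm, n2.symm, m2.symm, hnm⟩
    have k4 := hcoc x z y n m
      ⟨h1, h2, n1.symm, m1.symm, h3, n2.symm, m2.symm, n3.symm, m3.symm, hnm⟩
    have k5 := hanti1 x y n m ⟨h2, n1.symm, m1.symm, n3.symm, m3.symm, hnm⟩
    linarith
  · rintro M hM x z y n ⟨h1, h2, h3⟩ n1 n2 n3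
    have k1 := abs_le.mp (hM x z y n ⟨h1, h2, n1.symm, h3, n2.symm, n3.symm⟩)
    have k2 := abs_le.mp (hM z y x n ⟨h3, h1.symm, n2.symm, h2.symm, n3.symm, n1.symm⟩)
    have k3 := abs_le.mp (hM y x z n ⟨h2.symm, h3.symm, n3.symm, h1, n1.symm, n2.symm⟩)
    rw [abs_le]
    constructor <;> linarith [k1.1, k1.2, k2.1, k2.2, k3.1, k3.2]
end

section
/- Let X be a set with infinitely many points, let R be an anti-symmetric cross ratio on X, and let φ be the induced function on triples (extended by 0 on degenerate triples). Then φ satisfies the homogeneous cocycle equation for all quadruples of points: for all a, b, c, d ∈ X, φ(b,c,d) − φ(a,c,d) + φ(a,b,d) − φ(a,b,c) = 0. -/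
/-- the function `φ` on triples induced by an anti-symmetric cross ratio
`R` on an infinite set `X` (extended by `0` on degenerate triples) satisfies the
homogeneous cocycle equation for all quadruples of points. -/
theorem stmt2 {X : Type*} [Infinite X] (R : X → X → X → X → ℝ) (φ : X → X → X → ℝ)
    (hbdd : ∃ M, ∀ a b c d, PD4 a b c d → |R a b c d| ≤ M)
    (hanti1 : ∀ a b c d, PD4 a b c d → R a b c d = - R b a c d)
    (hanti2 : ∀ a b c d, PD4 a b c d → R c d a b = - R a b c d)
    (hcoc : ∀ a b b' c d, PD5 a b b' c d → R a b c d + R b b' c d = R a b' c d)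
    (hext1 : ∀ a b c, PD3 a b c → R a a b c = 0)
    (hext2 : ∀ a b c, PD3 a b c → R b c a a = 0)
    (hφ : ∀ ξ η ζ ν, PD3 ξ η ζ → ν ≠ ξ → ν ≠ η → ν ≠ ζ →
      φ ξ η ζ = (1 / 2 : ℝ) * (R ξ ζ η ν + R ζ η ξ ν + R η ξ ζ ν))
    (hφdeg : ∀ ξ η ζ, ¬ PD3 ξ η ζ → φ ξ η ζ = 0) :
    ∀ a b c d : X, φ b c d - φ a c d + φ a b d - φ a b c = 0 := by
  have anti : ∀ x y z e, x ≠ y → x ≠ z → x ≠ e → y ≠ z → y ≠ e → z ≠ e →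
      R x y z e = - R y x z e :=
    fun x y z e h1 h2 h3 h4 h5 h6 => hanti1 x y z e ⟨h1, h2, h3, h4, h5, h6⟩
  have sw1 : ∀ x y z, φ x y z = - φ y x z := by
    intro x y z
    by_cases h : PD3 x y z
    · obtain ⟨h1, h2, h3⟩ := h
      classical
      obtain ⟨e, he⟩ := Infinite.exists_notMem_finset ({x, y, z} : Finset X)
      simp only [Finset.mem_insert, Finset.mem_singleton, not_or] at he
      obtain ⟨e1, e2, e3⟩ := he
      rw [hφ x y z e ⟨h1, h2, h3⟩ e1 e2 e3, hφ y x z e ⟨h1.symm, h3, h2⟩ e2 e1 e3]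
      have q1 := anti x z y e h2 h1 (Ne.symm e1) h3.symm (Ne.symm e3) (Ne.symm e2)
      have q2 := anti z y x e h3.symm h2.symm (Ne.symm e3) h1.symm (Ne.symm e2) (Ne.symm e1)
      have q3 := anti y x z e h1.symm h3 (Ne.symm e2) h2 (Ne.symm e1) (Ne.symm e3)
      linarith
    · rw [hφdeg x y z h, hφdeg y x z (fun h' => h ⟨h'.1.symm, h'.2.2, h'.2.1⟩)]
      simp
  have sw2 : ∀ x y z, φ x y z = - φ x z y := by
    intro x y z
    by_cases h : PD3 x y z
    · obtain ⟨h1, h2, h3⟩ := h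
      classical
      obtain ⟨e, he⟩ := Infinite.exists_notMem_finset ({x, y, z} : Finset X)
      simp only [Finset.mem_insert, Finset.mem_singleton, not_or] at he
      obtain ⟨e1, e2, e3⟩ := he
      rw [hφ x y z e ⟨h1, h2, h3⟩ e1 e2 e3, hφ x z y e ⟨h2, h1, h3.symm⟩ e1 e3 e2]
      have q1 := anti x z y e h2 h1 (Ne.symm e1) h3.symm (Ne.symm e3) (Ne.symm e2)
      have q2 := anti z y x e h3.symm h2.symm (Ne.symm e3) h1.symm (Ne.symm e2) (Ne.symm e1)
      have q3 := anti y x z e h1.symm h3 (Ne.symm e2) h2 (Ne.symm e1) (Ne.symm e3)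
      linarith
    · rw [hφdeg x y z h, hφdeg x z y (fun h' => h ⟨h'.2.1, h'.1, h'.2.2.symm⟩)]
      simp
  have d1 : ∀ x z, φ x x z = 0 := fun x z => hφdeg _ _ _ (fun h => h.1 rfl)
  have d2 : ∀ x z, φ x z x = 0 := fun x z => hφdeg _ _ _ (fun h => h.2.1 rfl)
  have d3 : ∀ x z, φ z x x = 0 := fun x z => hφdeg _ _ _ (fun h => h.2.2 rfl)
  intro a b c d
  by_cases hab : a = b
  · subst hab; simp [d1]
  by_cases hac : a = c
  · subst hac; linarith [d1 a d, d2 a b, sw1 a b d]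
  by_cases had : a = d
  · subst had; linarith [d2 a c, d2 a b, sw1 a b c, sw2 b a c]
  by_cases hbc : b = c
  · subst hbc; simp [d1, d3]
  by_cases hbd : b = d
  · subst hbd; linarith [d2 b c, d3 b a, sw2 a b c]
  by_cases hcd : c = d
  · subst hcd; simp [d3]
  classical
  obtain ⟨e, he⟩ := Infinite.exists_notMem_finset ({a, b, c, d} : Finset X)
  simp only [Finset.mem_insert, Finset.mem_singleton, not_or] at he
  obtain ⟨ea, eb, ec, ed⟩ := he
  -- cyclic form of the cocycle relation
  have cyc : ∀ x y z w, PD4 x y z w → e ≠ x → e ≠ y → e ≠ z → e ≠ w →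
      R x y w e + R y z w e + R z x w e = 0 := by
    rintro x y z w ⟨h1, h2, h3, h4, h5, h6⟩ e1 e2 e3 e4
    have := hcoc x y z w e ⟨h1, h2, h3, e1.symm, h4, h5, e2.symm, h6, e3.symm, e4.symm⟩
    have := anti x z w e h2 h3 e1.symm h6 e3.symm e4.symm
    linarith
  rw [hφ b c d e ⟨hbc, hbd, hcd⟩ eb ec ed, hφ a c d e ⟨hac, had, hcd⟩ ea ec ed,
    hφ a b d e ⟨hab, had, hbd⟩ ea eb ed, hφ a b c e ⟨hab, hac, hbc⟩ ea eb ec]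
  have hba := Ne.symm hab
  have hca := Ne.symm hac
  have hda := Ne.symm had
  have hcb := Ne.symm hbc
  have hdb := Ne.symm hbd
  have hdc := Ne.symm hcd
  have k1 := cyc b d a c ⟨hbd, hba, hbc, hda, hdc, hac⟩ eb ed ea ec
  have k2 := cyc c b a d ⟨hcb, hca, hcd, hba, hbd, had⟩ ec eb ea ed
  have k3 := cyc d c b a ⟨hdc, hdb, hda, hcb, hca, hba⟩ ed ec eb ea
  have k4 := cyc d c a b ⟨hdc, hda, hdb, hca, hcb, hab⟩ ed ec ea eb
  have m1 := anti d a c e hda hdc (Ne.symm ed) hac (Ne.symm ea) (Ne.symm ec)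
  have m2 := anti a b c e hab hac (Ne.symm ea) hbc (Ne.symm eb) (Ne.symm ec)
  have m3 := anti c a d e hca hcd (Ne.symm ec) had (Ne.symm ea) (Ne.symm ed)
  have m4 := anti d b a e hdb hda (Ne.symm ed) hba (Ne.symm eb) (Ne.symm ea)
  have m5 := anti c b a e hcb hca (Ne.symm ec) hba (Ne.symm eb) (Ne.symm ea)
  have m6 := anti a c b e hac hab (Ne.symm ea) hcb (Ne.symm ec) (Ne.symm eb)
  have m7 := anti a b d e hab had (Ne.symm ea) hbd (Ne.symm eb) (Ne.symm ed)
  linarith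
end

section
/- Let X be a set with infinitely many points, let R be an anti-symmetric cross ratio on X, and let φ be the induced function on triples. Then for every quadruple (a,b,c,d) of pairwise distinct points of X one has φ(a,b,c) − φ(b,c,d) = R(c,b,a,d). -/
/-- for the function `φ` on triples induced by an anti-symmetric cross
ratio `R` on an infinite set `X`, one has `φ a b c - φ b c d = R c b a d` for every
quadruple `(a,b,c,d)` of pairwise distinct points. -/
theorem stmt3 {X : Type*} [Infinite X] (R : X → X → X → X → ℝ) (φ : X → X → X → ℝ)
    (hbdd : ∃ M, ∀ a b c d, PD4 a b c d → |R a b c d| ≤ M)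
    (hanti1 : ∀ a b c d, PD4 a b c d → R a b c d = - R b a c d)
    (hanti2 : ∀ a b c d, PD4 a b c d → R c d a b = - R a b c d)
    (hcoc : ∀ a b b' c d, PD5 a b b' c d → R a b c d + R b b' c d = R a b' c d)
    (hext1 : ∀ a b c, PD3 a b c → R a a b c = 0)
    (hext2 : ∀ a b c, PD3 a b c → R b c a a = 0)
    (hφ : ∀ ξ η ζ ν, PD3 ξ η ζ → ν ≠ ξ → ν ≠ η → ν ≠ ζ →
      φ ξ η ζ = (1 / 2 : ℝ) * (R ξ ζ η ν + R ζ η ξ ν + R η ξ ζ ν))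
    (hφdeg : ∀ ξ η ζ, ¬ PD3 ξ η ζ → φ ξ η ζ = 0) :
    ∀ a b c d : X, PD4 a b c d → φ a b c - φ b c d = R c b a d := by
  rintro a b c d ⟨hab, hac, had, hbc, hbd, hcd⟩
  have e1 := hφ a b c d ⟨hab, hac, hbc⟩ had.symm hbd.symm hcd.symm
  have e2 := hφ b c d a ⟨hbc, hbd, hcd⟩ hab hac had
  have swap : ∀ x y z w, PD4 x y z w → R x y w z = - R x y z w := by
    rintro x y z w ⟨h1, h2, h3, h4, h5, h6⟩
    have k1 := hanti2 x y z w ⟨h1, h2, h3, h4, h5, h6⟩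
    have k2 := hanti1 z w x y ⟨h6, h2.symm, h4.symm, h3.symm, h5.symm, h1⟩
    have k3 := hanti2 x y w z ⟨h1, h3, h2, h5, h4, h6.symm⟩
    linarith
  have f1 := hanti2 c a b d ⟨hac.symm, hbc.symm, hcd, hab, had, hbd⟩
  have f2 := hanti1 c a b d ⟨hac.symm, hbc.symm, hcd, hab, had, hbd⟩
  have f3 := swap b d c a ⟨hbd, hbc, hab.symm, hcd.symm, had.symm, hac.symm⟩
  have f4 := hanti2 b a d c ⟨hab.symm, hbd, hbc, had, hac, hcd.symm⟩
  have f5 := swap b a c d ⟨hab.symm, hbc, hbd, hac, had, hcd⟩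
  have f6 := swap c b a d ⟨hbc.symm, hac.symm, hcd, hab.symm, hbd, had⟩
  have f7 := swap c a b d ⟨hac.symm, hbc.symm, hcd, hab, had, hbd⟩
  linarith
end

section
/- Let Γ be a group acting on a set X with infinitely many points, let R be a Γ-invariant anti-symmetric cross ratio on X with |R| ≤ M on pairwise distinct quadruples, and let φ be the induced function on triples. Fix ξ, η ∈ X and define μ_ξ(γ₀,γ₁,γ₂) = φ(γ₀·ξ, γ₁·ξ, γ₂·ξ) and μ_η(γ₀,γ₁,γ₂) = φ(γ₀·η, γ₁·η, γ₂·η) for γ₀,γ₁,γ₂ ∈ Γ. Then there exists a function u : Γ × Γ → ℝ with |u| ≤ 3M everywhere and u(γγ₀, γγ₁) = u(γ₀,γ₁) for all γ, γ₀, γ₁ ∈ Γ, such that μ_ξ(γ₀,γ₁,γ₂) − μ_η(γ₀,γ₁,γ₂) = u(γ₁,γ₂) − u(γ₀,γ₂) + u(γ₀,γ₁) for all γ₀, γ₁, γ₂ ∈ Γ. -/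
/-- for a `Γ`-invariant anti-symmetric cross ratio `R` (with `|R| ≤ M` on
pairwise distinct quadruples) on an infinite `Γ`-set `X` with induced triple function
`φ`, and points `ξ η : X`, the difference of the two induced cochains
`μ_ξ (γ₀,γ₁,γ₂) = φ (γ₀•ξ) (γ₁•ξ) (γ₂•ξ)` and `μ_η` is the homogeneous coboundary of a
left-`Γ`-invariant function `u : Γ × Γ → ℝ` with `|u| ≤ 3 M`. -/
theorem stmt4 {X : Type*} [Infinite X] {Γ : Type*} [Group Γ] [MulAction Γ X]
    (R : X → X → X → X → ℝ) (φ : X → X → X → ℝ) (M : ℝ)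
    (hbdd : ∀ a b c d, PD4 a b c d → |R a b c d| ≤ M)
    (hanti1 : ∀ a b c d, PD4 a b c d → R a b c d = - R b a c d)
    (hanti2 : ∀ a b c d, PD4 a b c d → R c d a b = - R a b c d)
    (hcoc : ∀ a b b' c d, PD5 a b b' c d → R a b c d + R b b' c d = R a b' c d)
    (hext1 : ∀ a b c, PD3 a b c → R a a b c = 0)
    (hext2 : ∀ a b c, PD3 a b c → R b c a a = 0)
    (hinv : ∀ (γ : Γ) (a b c d : X), R (γ • a) (γ • b) (γ • c) (γ • d) = R a b c d)
    (hφ : ∀ ξ η ζ ν, PD3 ξ η ζ → ν ≠ ξ → ν ≠ η → ν ≠ ζ →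
      φ ξ η ζ = (1 / 2 : ℝ) * (R ξ ζ η ν + R ζ η ξ ν + R η ξ ζ ν))
    (hφdeg : ∀ ξ η ζ, ¬ PD3 ξ η ζ → φ ξ η ζ = 0)
    (ξ η : X) :
    ∃ u : Γ → Γ → ℝ,
      (∀ γ₀ γ₁, |u γ₀ γ₁| ≤ 3 * M) ∧
      (∀ γ γ₀ γ₁, u (γ * γ₀) (γ * γ₁) = u γ₀ γ₁) ∧
      (∀ γ₀ γ₁ γ₂ : Γ,
        φ (γ₀ • ξ) (γ₁ • ξ) (γ₂ • ξ) - φ (γ₀ • η) (γ₁ • η) (γ₂ • η)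
          = u γ₁ γ₂ - u γ₀ γ₂ + u γ₀ γ₁) := by
  have hanti3 : ∀ a b c d, PD4 a b c d → R a b d c = - R a b c d := by
    intro a b c d h
    have h' : PD4 c d a b := by unfold PD4 at *; grind
    have h'' : PD4 d c a b := by unfold PD4 at *; grind
    have e1 := hanti2 _ _ _ _ h'
    have e2 := hanti2 _ _ _ _ h''
    have e3 := hanti1 _ _ _ _ h'
    linarith
  have hν : ∀ a b c : X, ∃ ν, ν ≠ a ∧ ν ≠ b ∧ ν ≠ c := by
    intro a b c
    classical
    obtain ⟨ν, h⟩ := Infinite.exists_notMem_finset ({a, b, c} : Finset X)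
    exact ⟨ν, by simpa using h⟩
  have hM : 0 ≤ M := by
    obtain ⟨b, hb, -, -⟩ := hν ξ ξ ξ
    obtain ⟨c, hc1, hc2, -⟩ := hν ξ b b
    obtain ⟨d, hd1, hd2, hd3⟩ := hν ξ b c
    exact (abs_nonneg _).trans (hbdd ξ b c d ⟨hb.symm, hc1.symm, hd1.symm, hc2.symm, hd2.symm, hd3.symm⟩)
  have hφb : ∀ a b c, |φ a b c| ≤ 3 / 2 * M := by
    intro a b c
    by_cases h : PD3 a b c
    · obtain ⟨ν, h1, h2, h3⟩ := hν a b c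
      rw [hφ a b c ν h h1 h2 h3]
      have e1 := abs_le.1 (hbdd a c b ν (by unfold PD4 PD3 at *; grind))
      have e2 := abs_le.1 (hbdd c b a ν (by unfold PD4 PD3 at *; grind))
      have e3 := abs_le.1 (hbdd b a c ν (by unfold PD4 PD3 at *; grind))
      rw [abs_le]
      constructor <;> linarith
    · rw [hφdeg _ _ _ h, abs_zero]; linarith
  have hφinv : ∀ (g : Γ) a b c, φ (g • a) (g • b) (g • c) = φ a b c := by
    intro g a b c
    by_cases h : PD3 a b c
    · obtain ⟨ν, h1, h2, h3⟩ := hν a b c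
      rw [hφ a b c ν h h1 h2 h3, hφ (g • a) (g • b) (g • c) (g • ν)]
      · simp only [hinv]
      · simpa [PD3] using h
      all_goals simpa
    · rw [hφdeg _ _ _ h, hφdeg]
      simpa [PD3] using h
  have hsw1 : ∀ a b c, φ b a c = - φ a b c := by
    intro a b c
    by_cases h : PD3 a b c
    · obtain ⟨ν, h1, h2, h3⟩ := hν a b c
      rw [hφ a b c ν h h1 h2 h3, hφ b a c ν (by unfold PD3 at *; grind) h2 h1 h3]
      have e1 := hanti1 a c b ν (by unfold PD4 PD3 at *; grind)
      have e2 := hanti1 c b a ν (by unfold PD4 PD3 at *; grind)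
      have e3 := hanti1 b a c ν (by unfold PD4 PD3 at *; grind)
      linarith
    · rw [hφdeg _ _ _ h, hφdeg _ _ _ (by unfold PD3 at *; grind), neg_zero]
  have hsw2 : ∀ a b c, φ a c b = - φ a b c := by
    intro a b c
    by_cases h : PD3 a b c
    · obtain ⟨ν, h1, h2, h3⟩ := hν a b c
      rw [hφ a b c ν h h1 h2 h3, hφ a c b ν (by unfold PD3 at *; grind) h1 h3 h2]
      have e1 := hanti1 a c b ν (by unfold PD4 PD3 at *; grind)
      have e2 := hanti1 c b a ν (by unfold PD4 PD3 at *; grind)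
      have e3 := hanti1 b a c ν (by unfold PD4 PD3 at *; grind)
      linarith
    · rw [hφdeg _ _ _ h, hφdeg _ _ _ (by unfold PD3 at *; grind), neg_zero]
  have hcc : ∀ a b c d, φ b c d - φ a c d + φ a b d - φ a b c = 0 := by
    intro a b c d
    by_cases h : PD4 a b c d
    · have key : ∀ p q r s, PD4 p q r s → R q p r s = - R p q r s ∧ R p q s r = - R p q r s ∧
          R q p s r = R p q r s ∧ R r s p q = - R p q r s ∧ R s r p q = R p q r s ∧
          R r s q p = R p q r s ∧ R s r q p = - R p q r s := by
        intro p q r s k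
        have k1 : PD4 q p r s := by unfold PD4 at *; grind
        have k2 : PD4 p q s r := by unfold PD4 at *; grind
        have k3 : PD4 q p s r := by unfold PD4 at *; grind
        have e1 := hanti1 _ _ _ _ k
        have e2 := hanti3 _ _ _ _ k
        have e3 := hanti3 _ _ _ _ k1
        have f0 := hanti2 _ _ _ _ k
        have f1 := hanti2 _ _ _ _ k1
        have f2 := hanti2 _ _ _ _ k2
        have f3 := hanti2 _ _ _ _ k3
        refine ⟨?_, ?_, ?_, ?_, ?_, ?_, ?_⟩ <;> linarith
      obtain ⟨p1, p2, p3, p4, p5, p6, p7⟩ := key a b c d h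
      obtain ⟨q1, q2, q3, q4, q5, q6, q7⟩ := key a c b d (by unfold PD4 at *; grind)
      obtain ⟨r1, r2, r3, r4, r5, r6, r7⟩ := key a d b c (by unfold PD4 at *; grind)
      obtain ⟨h1, h2, h3, h4, h5, h6⟩ := h
      rw [hφ b c d a ⟨h4, h5, h6⟩ h1 h2 h3, hφ a c d b ⟨h2, h3, h6⟩ h1.symm h4 h5,
        hφ a b d c ⟨h1, h3, h5⟩ h2.symm h4.symm h6,
        hφ a b c d ⟨h1, h2, h4⟩ h3.symm h5.symm h6.symm]
      linarith
    · have z1 : ∀ x y, φ x x y = 0 := fun x y => hφdeg _ _ _ (by unfold PD3; grind)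
      have z2 : ∀ x y, φ x y y = 0 := fun x y => hφdeg _ _ _ (by unfold PD3; grind)
      have z3 : ∀ x y, φ x y x = 0 := fun x y => hφdeg _ _ _ (by unfold PD3; grind)
      have h' : a = b ∨ a = c ∨ a = d ∨ b = c ∨ b = d ∨ c = d := by unfold PD4 at h; grind
      rcases h' with rfl | rfl | rfl | rfl | rfl | rfl
      · linarith [z1 a c, z1 a d]
      · linarith [z1 a d, z3 a b, hsw1 a b d]
      · linarith [z3 a c, z3 a b, hsw1 b a c, hsw2 b c a]
      · linarith [z1 b d, z2 a b]
      · linarith [z3 b c, z2 a b, hsw2 a b c]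
      · linarith [z2 b c, z2 a c]
  refine ⟨fun g₀ g₁ => φ (g₀ • ξ) (g₁ • ξ) (g₁ • η) - φ (g₀ • ξ) (g₀ • η) (g₁ • η), ?_, ?_, ?_⟩
  · intro g₀ g₁
    have e1 := abs_le.1 (hφb (g₀ • ξ) (g₁ • ξ) (g₁ • η))
    have e2 := abs_le.1 (hφb (g₀ • ξ) (g₀ • η) (g₁ • η))
    rw [abs_le]
    constructor <;> linarith
  · intro g g₀ g₁
    simp only [mul_smul, hφinv]
  · intro g₀ g₁ g₂
    have e1 := hcc (g₀ • ξ) (g₁ • ξ) (g₂ • ξ) (g₂ • η)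
    have e2 := hcc (g₀ • ξ) (g₁ • ξ) (g₁ • η) (g₂ • η)
    have e3 := hcc (g₀ • ξ) (g₀ • η) (g₁ • η) (g₂ • η)
    linarith
end

section
/- There is exactly one anti-symmetric cross ratio R₀ on the circle ℝ/ℤ such that R₀(a,b,c,d) = 0 whenever the quadruple (a,b,c,d) of pairwise distinct points is ordered, and R₀(a,b,c,d) = 1 whenever the quadruple (a,c,b,d) is ordered. -/
/-- The circle `ℝ/ℤ`. -/
abbrev Circle1 := AddCircle (1 : ℝ)

/-- A triple of points of `ℝ/ℤ` is ordered if it lifts to reals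
`t₁ < t₂ < t₃ < t₁ + 1`. -/
def Ordered3 (a b c : Circle1) : Prop :=
  ∃ t₁ t₂ t₃ : ℝ, t₁ < t₂ ∧ t₂ < t₃ ∧ t₃ < t₁ + 1 ∧
    a = (t₁ : Circle1) ∧ b = (t₂ : Circle1) ∧ c = (t₃ : Circle1)

/-- A quadruple of points of `ℝ/ℤ` is ordered if it lifts to reals
`t₁ < t₂ < t₃ < t₄ < t₁ + 1`. -/
def Ordered4 (a b c d : Circle1) : Prop :=
  ∃ t₁ t₂ t₃ t₄ : ℝ, t₁ < t₂ ∧ t₂ < t₃ ∧ t₃ < t₄ ∧ t₄ < t₁ + 1 ∧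
    a = (t₁ : Circle1) ∧ b = (t₂ : Circle1) ∧ c = (t₃ : Circle1) ∧ d = (t₄ : Circle1)

/-- `R` is an anti-symmetric cross ratio: bounded on pairwise distinct quadruples,
anti-symmetric in the first pair and under exchanging the two pairs, additive (cocycle)
in the first pair, and extended by `0` to the degenerate quadruples. -/
def IsCrossRatio {X : Type*} (R : X → X → X → X → ℝ) : Prop :=
  (∃ M, ∀ a b c d, PD4 a b c d → |R a b c d| ≤ M) ∧
  (∀ a b c d, PD4 a b c d → R a b c d = - R b a c d) ∧
  (∀ a b c d, PD4 a b c d → R c d a b = - R a b c d) ∧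
  (∀ a b b' c d, PD5 a b b' c d → R a b c d + R b b' c d = R a b' c d) ∧
  (∀ a b c, PD3 a b c → R a a b c = 0) ∧
  (∀ a b c, PD3 a b c → R b c a a = 0)

/-- Representative in `[0,1)`. -/
noncomputable def rep (x : Circle1) : ℝ := (AddCircle.equivIco (1:ℝ) 0 x : ℝ)

lemma rep_coe (t : ℝ) : rep (t : Circle1) = Int.fract t := by
  unfold rep
  rw [AddCircle.coe_equivIco_mk_apply]
  simp

/-- Sign of the comparison of two reals. -/
noncomputable def sg (x y : ℝ) : ℝ := if x < y then 1 else if y < x then -1 else 0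

lemma sg_swap (x y : ℝ) : sg x y = - sg y x := by
  unfold sg
  split_ifs <;> first | linarith | norm_num

lemma sg_abs (x y : ℝ) : |sg x y| ≤ 1 := by
  unfold sg
  split_ifs <;> norm_num

lemma sg_lt {x y : ℝ} (h : x < y) : sg x y = 1 := by simp [sg, h]

lemma sg_gt {x y : ℝ} (h : y < x) : sg x y = -1 := by simp [sg, h, h.le]

/-- The cross ratio. -/
noncomputable def RR (a b c d : Circle1) : ℝ :=
  (sg (rep a) (rep c) - sg (rep b) (rep c) - sg (rep a) (rep d) + sg (rep b) (rep d)) / 2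

lemma ordered_rep {a b c d : Circle1} (h : Ordered4 a b c d) :
    (rep a < rep b ∧ rep b < rep c ∧ rep c < rep d) ∨
    (rep b < rep c ∧ rep c < rep d ∧ rep d < rep a) ∨
    (rep c < rep d ∧ rep d < rep a ∧ rep a < rep b) ∨
    (rep d < rep a ∧ rep a < rep b ∧ rep b < rep c) := by
  obtain ⟨t₁, t₂, t₃, t₄, h1, h2, h3, h4, rfl, rfl, rfl, rfl⟩ := h
  simp only [rep_coe]
  have key : ∀ t : ℝ, t₁ < t → t < t₁ + 1 → ⌊t⌋ = ⌊t₁⌋ ∨ ⌊t⌋ = ⌊t₁⌋ + 1 := by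
    intro t ha hb
    have h5 := Int.floor_mono ha.le
    have h6 := Int.floor_mono hb.le
    rw [Int.floor_add_one] at h6
    omega
  have m1 := Int.floor_mono h2.le
  have m2 := Int.floor_mono h3.le
  simp only [Int.fract]
  rcases key t₂ (by linarith) (by linarith) with k2 | k2 <;>
  rcases key t₃ (by linarith) (by linarith) with k3 | k3 <;>
  rcases key t₄ (by linarith) (by linarith) with k4 | k4 <;>
  first
  | (exfalso; omega)
  | (rw [k2, k3, k4]; push_cast
     first
     | (left; refine ⟨?_, ?_, ?_⟩ <;> linarith)
     | (right; left; refine ⟨?_, ?_, ?_⟩ <;> linarith)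
     | (right; right; left; refine ⟨?_, ?_, ?_⟩ <;> linarith)
     | (right; right; right; refine ⟨?_, ?_, ?_⟩ <;> linarith))

lemma RR_zero (a b c d : Circle1) (h : Ordered4 a b c d) : RR a b c d = 0 := by
  unfold RR sg
  rcases ordered_rep h with ⟨h1, h2, h3⟩ | ⟨h1, h2, h3⟩ | ⟨h1, h2, h3⟩ | ⟨h1, h2, h3⟩ <;>
  split_ifs <;> first | (exfalso; linarith) | norm_num

lemma RR_one (a b c d : Circle1) (h : Ordered4 a c b d) : RR a b c d = 1 := by
  unfold RR sg
  rcases ordered_rep h with ⟨h1, h2, h3⟩ | ⟨h1, h2, h3⟩ | ⟨h1, h2, h3⟩ | ⟨h1, h2, h3⟩ <;>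
  split_ifs <;> first | (exfalso; linarith) | norm_num

lemma ordered_rot {a b c d : Circle1} (h : Ordered4 a b c d) : Ordered4 b c d a := by
  obtain ⟨t₁, t₂, t₃, t₄, h1, h2, h3, h4, rfl, rfl, rfl, rfl⟩ := h
  exact ⟨t₂, t₃, t₄, t₁ + 1, h2, h3, h4, by linarith, rfl, rfl, rfl,
    (AddCircle.coe_add_period (1:ℝ) t₁).symm⟩

lemma exists_lift (s : ℝ) (x : Circle1) (h : (s : Circle1) ≠ x) :
    ∃ t : ℝ, s < t ∧ t < s + 1 ∧ x = (t : Circle1) := by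
  have hm := (AddCircle.equivIco (1:ℝ) s x).2
  have hx : (((AddCircle.equivIco (1:ℝ) s x : ℝ)) : Circle1) = x :=
    (AddCircle.equivIco (1:ℝ) s).symm_apply_apply x
  refine ⟨_, lt_of_le_of_ne hm.1 ?_, hm.2, hx.symm⟩
  intro he
  apply h
  rw [← hx, ← he]

lemma ordered_cases (a b c d : Circle1) (h : PD4 a b c d) :
    Ordered4 a b c d ∨ Ordered4 a b d c ∨ Ordered4 a c b d ∨ Ordered4 a c d b ∨
    Ordered4 a d b c ∨ Ordered4 a d c b := by
  obtain ⟨hab, hac, had, hbc, hbd, hcd⟩ := h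
  induction a using QuotientAddGroup.induction_on with | H s => ?_
  obtain ⟨t, ht, ht', rfl⟩ := exists_lift s b hab
  obtain ⟨u, hu, hu', rfl⟩ := exists_lift s c hac
  obtain ⟨v, hv, hv', rfl⟩ := exists_lift s d had
  have h1 : t ≠ u := fun e => hbc (by rw [e])
  have h2 : t ≠ v := fun e => hbd (by rw [e])
  have h3 : u ≠ v := fun e => hcd (by rw [e])
  have mk : ∀ x y z : ℝ, s < x → x < y → y < z → z < s + 1 →
      Ordered4 (s : Circle1) (x : Circle1) (y : Circle1) (z : Circle1) :=
    fun x y z p q r w => ⟨s, x, y, z, p, q, r, w, rfl, rfl, rfl, rfl⟩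
  rcases lt_or_gt_of_ne h1 with h1 | h1 <;> rcases lt_or_gt_of_ne h2 with h2 | h2 <;>
  rcases lt_or_gt_of_ne h3 with h3 | h3
  · exact Or.inl (mk _ _ _ ht h1 h3 hv')
  · exact Or.inr (Or.inl (mk _ _ _ ht h2 h3 hu'))
  · exfalso; linarith
  · exact Or.inr (Or.inr (Or.inr (Or.inr (Or.inl (mk _ _ _ hv h2 h1 hu')))))
  · exact Or.inr (Or.inr (Or.inl (mk _ _ _ hu h1 h2 hv')))
  · exfalso; linarith
  · exact Or.inr (Or.inr (Or.inr (Or.inl (mk _ _ _ hu h3 h2 ht'))))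
  · exact Or.inr (Or.inr (Or.inr (Or.inr (Or.inr (mk _ _ _ hv h3 h1 ht')))))

lemma RR_cross : IsCrossRatio RR := by
  refine ⟨⟨2, ?_⟩, ?_, ?_, ?_, ?_, ?_⟩
  · intro a b c d _
    unfold RR
    have h1 := abs_le.1 (sg_abs (rep a) (rep c))
    have h2 := abs_le.1 (sg_abs (rep b) (rep c))
    have h3 := abs_le.1 (sg_abs (rep a) (rep d))
    have h4 := abs_le.1 (sg_abs (rep b) (rep d))
    rw [abs_le]
    constructor <;> linarith
  · intro a b c d _; unfold RR; ring
  · intro a b c d _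
    unfold RR
    rw [sg_swap (rep c) (rep a), sg_swap (rep c) (rep b), sg_swap (rep d) (rep a),
      sg_swap (rep d) (rep b)]
    ring
  · intro a b b' c d _; unfold RR; ring
  · intro a b c _; unfold RR; ring
  · intro a b c _; unfold RR; ring

lemma swap2 {R : Circle1 → Circle1 → Circle1 → Circle1 → ℝ} (hR : IsCrossRatio R)
    (a b c d : Circle1) (h : PD4 a b c d) : R a b c d = - R a b d c := by
  obtain ⟨_, h1, h2, _⟩ := hR
  obtain ⟨hab, hac, had, hbc, hbd, hcd⟩ := h
  have e1 := h2 a b c d ⟨hab, hac, had, hbc, hbd, hcd⟩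
  have e2 := h1 c d a b ⟨hcd, hac.symm, hbc.symm, had.symm, hbd.symm, hab⟩
  have e3 := h2 a b d c ⟨hab, had, hac, hbd, hbc, hcd.symm⟩
  linarith

lemma R_unique {R : Circle1 → Circle1 → Circle1 → Circle1 → ℝ} (hR : IsCrossRatio R)
    (h0 : ∀ a b c d, Ordered4 a b c d → R a b c d = 0)
    (h1 : ∀ a b c d, Ordered4 a c b d → R a b c d = 1)
    (a b c d : Circle1) (h : PD4 a b c d) :
    (Ordered4 a b c d → R a b c d = 0) ∧ (Ordered4 a b d c → R a b c d = 0) ∧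
    (Ordered4 a c b d → R a b c d = 1) ∧ (Ordered4 a c d b → R a b c d = 0) ∧
    (Ordered4 a d b c → R a b c d = -1) ∧ (Ordered4 a d c b → R a b c d = 0) := by
  have e1 := swap2 hR a b c d h
  have e2 := hR.2.1 a b c d h
  obtain ⟨hab, hac, had, hbc, hbd, hcd⟩ := h
  have e3 := swap2 hR b a c d ⟨hab.symm, hbc, hbd, hac, had, hcd⟩
  refine ⟨h0 _ _ _ _, fun o => ?_, h1 _ _ _ _, fun o => ?_, fun o => ?_, fun o => ?_⟩
  · rw [e1, h0 _ _ _ _ o, neg_zero]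
  · rw [e2, h0 _ _ _ _ (ordered_rot (ordered_rot (ordered_rot o))), neg_zero]
  · rw [e1, h1 _ _ _ _ o]
  · rw [e2, e3, h0 _ _ _ _ (ordered_rot (ordered_rot (ordered_rot o))), neg_zero, neg_zero]

/-- there is exactly one anti-symmetric cross ratio `R₀` on the circle
`ℝ/ℤ` (as a function on pairwise distinct quadruples) with `R₀ a b c d = 0` whenever
`(a,b,c,d)` is ordered and `R₀ a b c d = 1` whenever `(a,c,b,d)` is ordered. -/
theorem stmt7 :
    (∃ R₀ : Circle1 → Circle1 → Circle1 → Circle1 → ℝ, IsCrossRatio R₀ ∧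
      (∀ a b c d, Ordered4 a b c d → R₀ a b c d = 0) ∧
      (∀ a b c d, Ordered4 a c b d → R₀ a b c d = 1)) ∧
    (∀ R R' : Circle1 → Circle1 → Circle1 → Circle1 → ℝ,
      IsCrossRatio R → (∀ a b c d, Ordered4 a b c d → R a b c d = 0) →
      (∀ a b c d, Ordered4 a c b d → R a b c d = 1) →
      IsCrossRatio R' → (∀ a b c d, Ordered4 a b c d → R' a b c d = 0) →
      (∀ a b c d, Ordered4 a c b d → R' a b c d = 1) →
      ∀ a b c d, PD4 a b c d → R a b c d = R' a b c d) := by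
  refine ⟨⟨RR, RR_cross, RR_zero, RR_one⟩, ?_⟩
  intro R R' hR h0 h1 hR' h0' h1' a b c d h
  obtain ⟨p1, p2, p3, p4, p5, p6⟩ := R_unique hR h0 h1 a b c d h
  obtain ⟨q1, q2, q3, q4, q5, q6⟩ := R_unique hR' h0' h1' a b c d h
  rcases ordered_cases a b c d h with o | o | o | o | o | o
  · rw [p1 o, q1 o]
  · rw [p2 o, q2 o]
  · rw [p3 o, q3 o]
  · rw [p4 o, q4 o]
  · rw [p5 o, q5 o]
  · rw [p6 o, q6 o]
end

section
/- Let R be an anti-symmetric cross ratio on the circle ℝ/ℤ such that R(a,b,c,d) = 0 for every ordered quadruple (a,b,c,d) of pairwise distinct points. Then there is a constant k ∈ ℝ such that R(a,b,c,d) = k·R₀(a,b,c,d) for every quadruple (a,b,c,d) of pairwise distinct points; in particular R(a,b,c,d) = k whenever the quadruple (a,c,b,d) is ordered. -/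
/-- Reals at positive distance less than one have distinct images. -/
lemma coe_ne_aux {s t : ℝ} (h : s < t) (h' : t < s + 1) : (s : Circle1) ≠ (t : Circle1) := by
  intro e
  haveI : Fact ((0 : ℝ) < 1) := ⟨one_pos⟩
  exact h.ne ((AddCircle.coe_eq_coe_iff_of_mem_Ico (p := (1 : ℝ)) (a := s)
    ⟨le_refl _, by linarith⟩ ⟨h.le, h'⟩).1 e)

lemma coe_add_one_aux (t : ℝ) : ((t + 1 : ℝ) : Circle1) = (t : Circle1) := by
  simpa using AddCircle.coe_add_period (1 : ℝ) t

lemma rot_aux (R : Circle1 → Circle1 → Circle1 → Circle1 → ℝ) (hR : IsCrossRatio R)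
    {p q r s : ℝ} (h1 : p < q) (h2 : q < r) (h3 : r < s) (h4 : s < p + 1) :
    R q s r (p + 1 : ℝ) = R p r q s := by
  obtain ⟨-, ha, hs, -, -, -⟩ := hR
  rw [coe_add_one_aux]
  have pq := coe_ne_aux h1 (by linarith)
  have pr := coe_ne_aux (h1.trans h2) (by linarith)
  have ps := coe_ne_aux ((h1.trans h2).trans h3) (by linarith)
  have qr := coe_ne_aux h2 (by linarith)
  have qs := coe_ne_aux (h2.trans h3) (by linarith)
  have rs := coe_ne_aux h3 (by linarith)
  have e1 := hs r p q s ⟨pr.symm, qr.symm, rs, pq, ps, qs⟩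
  have e2 := ha p r q s ⟨pr, pq, ps, qr.symm, rs, qs⟩
  linarith

lemma move_aux (R : Circle1 → Circle1 → Circle1 → Circle1 → ℝ) (hR : IsCrossRatio R)
    (hR0 : ∀ a b c d, Ordered4 a b c d → R a b c d = 0)
    {x p q r s : ℝ} (h0 : x ≤ p) (h1 : p < q) (h2 : q < r) (h3 : r < s) (h4 : s < x + 1) :
    R p r q s = R x r q s := by
  rcases h0.eq_or_lt with rfl | h0
  · rfl
  have e := hR.2.2.2.1 x p r q s ⟨coe_ne_aux h0 (by linarith), coe_ne_aux (by linarith) (by linarith),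
    coe_ne_aux (by linarith) (by linarith), coe_ne_aux (by linarith) (by linarith),
    coe_ne_aux (by linarith) (by linarith), coe_ne_aux (by linarith) (by linarith),
    coe_ne_aux (by linarith) (by linarith), (coe_ne_aux (by linarith) (by linarith)).symm,
    coe_ne_aux (by linarith) (by linarith), coe_ne_aux (by linarith) (by linarith)⟩
  have z := hR0 x p q s ⟨x, p, q, s, h0, h1, h2.trans h3, h4, rfl, rfl, rfl, rfl⟩
  linarith

lemma down_aux (R : Circle1 → Circle1 → Circle1 → Circle1 → ℝ) (hR : IsCrossRatio R)
    (hR0 : ∀ a b c d, Ordered4 a b c d → R a b c d = 0)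
    {p q r s p' q' r' s' : ℝ} (h1 : p < q) (h2 : q < r) (h3 : r < s) (h4 : s < p' + 1)
    (h1' : p' < q') (h2' : q' < r') (h3' : r' < s')
    (hp : p' ≤ p) (hq : q' ≤ q) (hr : r' ≤ r) (hs : s' ≤ s) :
    R p r q s = R p' r' q' s' := by
  rw [move_aux R hR hR0 hp h1 h2 h3 h4,
    ← rot_aux R hR (p := p') (q := q) (r := r) (s := s) (by linarith) h2 h3 h4,
    move_aux R hR hR0 hq h2 h3 h4 (by linarith),
    ← rot_aux R hR (p := q') (q := r) (r := s) (s := p' + 1) (by linarith) h3 h4 (by linarith),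
    move_aux R hR hR0 hr h3 h4 (by linarith) (by linarith),
    ← rot_aux R hR (p := r') (q := s) (r := p' + 1) (s := q' + 1) (by linarith) h4
      (by linarith) (by linarith),
    move_aux R hR hR0 hs h4 (by linarith) (by linarith) (by linarith),
    rot_aux R hR (p := r') (q := s') (r := p' + 1) (s := q' + 1) (by linarith) (by linarith) (by linarith) (by linarith),
    rot_aux R hR (p := q') (q := r') (r := s') (s := p' + 1) (by linarith) (by linarith) (by linarith) (by linarith),
    rot_aux R hR (p := p') (q := q') (r := r') (s := s') (by linarith) (by linarith) (by linarith) (by linarith)]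

lemma const_aux (R : Circle1 → Circle1 → Circle1 → Circle1 → ℝ) (hR : IsCrossRatio R)
    (hR0 : ∀ a b c d, Ordered4 a b c d → R a b c d = 0)
    {p q r s p' q' r' s' : ℝ} (h0 : 0 ≤ p) (h1 : p < q) (h2 : q < r) (h3 : r < s) (h4 : s < 1)
    (h0' : 0 ≤ p') (h1' : p' < q') (h2' : q' < r') (h3' : r' < s') (h4' : s' < 1) :
    R p r q s = R p' r' q' s' := by
  have k0 : 0 ≤ min p p' := le_min h0 h0'
  have k1 : min p p' < min q q' := min_lt_min h1 h1'
  have k2 : min q q' < min r r' := min_lt_min h2 h2'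
  have k3 : min r r' < min s s' := min_lt_min h3 h3'
  rw [down_aux R hR hR0 h1 h2 h3 (by linarith) k1 k2 k3 (min_le_left _ _) (min_le_left _ _)
    (min_le_left _ _) (min_le_left _ _),
    down_aux R hR hR0 h1' h2' h3' (by linarith) k1 k2 k3 (min_le_right _ _) (min_le_right _ _)
    (min_le_right _ _) (min_le_right _ _)]

/-- an anti-symmetric cross ratio `R` on the circle `ℝ/ℤ` which vanishes
on all ordered quadruples of pairwise distinct points is a constant multiple `k` of the
cross ratio `R₀`; in particular `R a b c d = k` whenever `(a,c,b,d)` is ordered. -/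
theorem stmt9 (R : Circle1 → Circle1 → Circle1 → Circle1 → ℝ)
    (hR : IsCrossRatio R)
    (hR0 : ∀ a b c d, Ordered4 a b c d → R a b c d = 0)
    (R₀ : Circle1 → Circle1 → Circle1 → Circle1 → ℝ)
    (hR₀ : IsCrossRatio R₀)
    (hR₀0 : ∀ a b c d, Ordered4 a b c d → R₀ a b c d = 0)
    (hR₀1 : ∀ a b c d, Ordered4 a c b d → R₀ a b c d = 1) :
    ∃ k : ℝ,
      (∀ a b c d, PD4 a b c d → R a b c d = k * R₀ a b c d) ∧
      (∀ a b c d, Ordered4 a c b d → R a b c d = k) := by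
  obtain ⟨k, hk⟩ : ∃ k : ℝ, ∀ p q r s : ℝ, 0 ≤ p → p < q → q < r → r < s → s < 1 →
      R p r q s = k :=
    ⟨R (0 : ℝ) (1 / 2 : ℝ) (1 / 4 : ℝ) (3 / 4 : ℝ), fun p q r s h0 h1 h2 h3 h4 =>
      const_aux R hR hR0 h0 h1 h2 h3 h4 (by norm_num) (by norm_num) (by norm_num)
        (by norm_num) (by norm_num)⟩
  have main : ∀ a b c d, PD4 a b c d → R a b c d = k * R₀ a b c d := by
    -- the symmetries
    have s1 : ∀ a b c d, PD4 a b c d → R b a c d = k * R₀ b a c d →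
        R a b c d = k * R₀ a b c d := by
      intro a b c d h e
      rw [hR.2.1 a b c d h, hR₀.2.1 a b c d h, e]; ring
    have s2 : ∀ a b c d, PD4 a b c d → R c d a b = k * R₀ c d a b →
        R a b c d = k * R₀ a b c d := by
      intro a b c d h e
      rw [hR.2.2.1 a b c d h, hR₀.2.2.1 a b c d h] at e
      linarith
    have z1 : ∀ a b c d : ℝ, 0 ≤ a → b < 1 → d < 1 → a < b → c < d → a < c → b ≠ c → b ≠ d →
        PD4 (a : Circle1) b c d → R a b c d = k * R₀ a b c d := by
      intro a b c d ha hb hd hab hcd hac hbc hbd hp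
      rcases lt_or_gt_of_ne hbc with h | h
      · have o : Ordered4 a b c d :=
          ⟨a, b, c, d, hab, h, hcd, by linarith, rfl, rfl, rfl, rfl⟩
        rw [hR0 _ _ _ _ o, hR₀0 _ _ _ _ o, mul_zero]
      rcases lt_or_gt_of_ne hbd with h' | h'
      · have o : Ordered4 a c b d :=
          ⟨a, c, b, d, hac, h, h', by linarith, rfl, rfl, rfl, rfl⟩
        rw [hk a c b d ha hac h h' hd, hR₀1 _ _ _ _ o, mul_one]
      · have o : Ordered4 b a c d :=
          ⟨b, a + 1, c + 1, d + 1, by linarith, by linarith, by linarith, by linarith, rfl,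
            (coe_add_one_aux a).symm, (coe_add_one_aux c).symm, (coe_add_one_aux d).symm⟩
        apply s1 _ _ _ _ hp
        rw [hR0 _ _ _ _ o, hR₀0 _ _ _ _ o, mul_zero]
    have z2 : ∀ a b c d : ℝ, 0 ≤ a → 0 ≤ c → b < 1 → d < 1 → a < b → c < d →
        PD4 (a : Circle1) b c d → R a b c d = k * R₀ a b c d := by
      intro a b c d ha hc hb hd hab hcd hp
      obtain ⟨n1, n2, n3, n4, n5, n6⟩ := id hp
      have m2 : a ≠ c := fun h => n2 (by rw [h])
      have m3 : a ≠ d := fun h => n3 (by rw [h])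
      have m4 : b ≠ c := fun h => n4 (by rw [h])
      have m5 : b ≠ d := fun h => n5 (by rw [h])
      rcases lt_or_gt_of_ne m2 with h | h
      · exact z1 a b c d ha hb hd hab hcd h m4 m5 hp
      · exact s2 _ _ _ _ hp (z1 c d a b hc hd hb hcd hab h m3.symm m5.symm
          ⟨n6, n2.symm, n4.symm, n3.symm, n5.symm, n1⟩)
    have z3 : ∀ a b c d : ℝ, 0 ≤ a → 0 ≤ b → 0 ≤ c → a < 1 → b < 1 → d < 1 → c < d →
        PD4 (a : Circle1) b c d → R a b c d = k * R₀ a b c d := by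
      intro a b c d ha hb hc ha' hb' hd hcd hp
      obtain ⟨n1, n2, n3, n4, n5, n6⟩ := id hp
      have m1 : a ≠ b := fun h => n1 (by rw [h])
      rcases lt_or_gt_of_ne m1 with h | h
      · exact z2 a b c d ha hc hb' hd h hcd hp
      · exact s1 _ _ _ _ hp (z2 b a c d hb hc ha' hd h hcd ⟨n1.symm, n4, n5, n2, n3, n6⟩)
    have z4 : ∀ a b c d : ℝ, 0 ≤ a → 0 ≤ b → 0 ≤ c → 0 ≤ d → a < 1 → b < 1 → c < 1 → d < 1 →
        PD4 (a : Circle1) b c d → R a b c d = k * R₀ a b c d := by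
      intro a b c d ha hb hc hd ha' hb' hc' hd' hp
      obtain ⟨n1, n2, n3, n4, n5, n6⟩ := id hp
      have m6 : c ≠ d := fun h => n6 (by rw [h])
      rcases lt_or_gt_of_ne m6 with h | h
      · exact z3 a b c d ha hb hc ha' hb' hd' h hp
      · have q1 : PD4 (c : Circle1) d a b := ⟨n6, n2.symm, n4.symm, n3.symm, n5.symm, n1⟩
        have q2 : PD4 (d : Circle1) c a b :=
          ⟨n6.symm, n3.symm, n5.symm, n2.symm, n4.symm, n1⟩
        exact s2 _ _ _ _ hp (s1 _ _ _ _ q1 (s2 _ _ _ _ q2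
          (z3 a b d c ha hb hd ha' hb' hc' h ⟨n1, n3, n2, n5, n4, n6.symm⟩)))
    have lift : ∀ a : Circle1, ∃ t : ℝ, 0 ≤ t ∧ t < 1 ∧ (t : Circle1) = a := by
      intro a
      obtain ⟨t, rfl⟩ := QuotientAddGroup.mk_surjective a
      refine ⟨Int.fract t, Int.fract_nonneg t, Int.fract_lt_one t, ?_⟩
      change ((Int.fract t : ℝ) : Circle1) = (t : Circle1)
      have e : Int.fract t = t - (⌊t⌋ : ℤ) • (1 : ℝ) := by
        rw [zsmul_eq_mul, mul_one]; rfl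
      rw [e, AddCircle.coe_sub, AddCircle.coe_zsmul, AddCircle.coe_period, smul_zero, sub_zero]
    intro a b c d hp
    obtain ⟨a, ha, ha', rfl⟩ := lift a
    obtain ⟨b, hb, hb', rfl⟩ := lift b
    obtain ⟨c, hc, hc', rfl⟩ := lift c
    obtain ⟨d, hd, hd', rfl⟩ := lift d
    exact z4 a b c d ha hb hc hd ha' hb' hc' hd' hp
  refine ⟨k, main, ?_⟩
  intro a b c d o
  have o' := o
  obtain ⟨p, q, r, s, h1, h2, h3, h4, rfl, rfl, rfl, rfl⟩ := o
  rw [main _ _ _ _ ⟨coe_ne_aux (by linarith) (by linarith), coe_ne_aux (by linarith) (by linarith),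
    coe_ne_aux (by linarith) (by linarith), (coe_ne_aux (by linarith) (by linarith)).symm,
    coe_ne_aux (by linarith) (by linarith), coe_ne_aux (by linarith) (by linarith)⟩,
    hR₀1 _ _ _ _ o', mul_one]
end

section
/- Let Λ be a measurable space with a measure μ, and let G be a group acting on Λ such that for every h ∈ G the map u ↦ h·u is measurable. Let φ : Λ³ → ℝ satisfy φ(h·x, h·y, h·z) = φ(x,y,z) for all h ∈ G and x,y,z ∈ Λ, and φ(x,y,z) = −φ(y,x,z) for all x,y,z ∈ Λ. Fix a, b ∈ Λ and g ∈ G with g·a = b and g·b = a, and assume that the function u ↦ φ(a,b,u) is measurable. Assume further that for every measurable set U ⊆ Λ with μ(U) > 0 which satisfies h·U = U for every h ∈ G with h·a = a and h·b = b, one has μ(U ∩ g·U) > 0. Then φ(a,b,u) = 0 for μ-almost every u ∈ Λ. -/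
open MeasureTheory Pointwise

/-- let `G` act measurably on a measure space `(Λ, μ)`, let `φ` be a
`G`-invariant function on triples which is anti-symmetric in its first two arguments,
let `g` interchange `a` and `b`, and suppose every positive-measure measurable set
invariant under the stabilizer of `(a,b)` meets its image under `g` in positive
measure. Then `φ a b u = 0` for `μ`-almost every `u`. -/
theorem stmt10 {Λ : Type*} [MeasurableSpace Λ] (μ : Measure Λ)
    {G : Type*} [Group G] [MulAction G Λ]
    (hmeas : ∀ h : G, Measurable fun u : Λ => h • u)
    (φ : Λ → Λ → Λ → ℝ)
    (hinv : ∀ (h : G) (x y z : Λ), φ (h • x) (h • y) (h • z) = φ x y z)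
    (halt : ∀ x y z : Λ, φ x y z = - φ y x z)
    (a b : Λ) (g : G) (hga : g • a = b) (hgb : g • b = a)
    (hfmeas : Measurable fun u : Λ => φ a b u)
    (hmix : ∀ U : Set Λ, MeasurableSet U → 0 < μ U →
      (∀ h : G, h • a = a → h • b = b → h • U = U) → 0 < μ (U ∩ g • U)) :
    ∀ᵐ u ∂μ, φ a b u = 0 := by
  have key : ∀ V : Set ℝ, MeasurableSet V → (∀ t ∈ V, -t ∉ V) →
      μ ((fun u : Λ => φ a b u) ⁻¹' V) = 0 := by
    intro V hV hneg
    by_contra hne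
    have hpos := hmix _ (hfmeas hV) (pos_iff_ne_zero.mpr hne) (by
      intro h ha hb
      ext u
      rw [Set.mem_smul_set_iff_inv_smul_mem]
      have e := hinv h a b (h⁻¹ • u)
      rw [ha, hb, smul_inv_smul] at e
      simp only [Set.mem_preimage, e])
    have hempty : ((fun u : Λ => φ a b u) ⁻¹' V) ∩ g • ((fun u : Λ => φ a b u) ⁻¹' V) = ∅ := by
      ext u
      simp only [Set.mem_inter_iff, Set.mem_smul_set_iff_inv_smul_mem, Set.mem_preimage,
        Set.mem_empty_iff_false, iff_false, not_and]
      have e := hinv g a b (g⁻¹ • u)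
      rw [hga, hgb, smul_inv_smul, halt b a u] at e
      intro hu
      rw [← e]
      exact hneg _ hu
    rw [hempty, measure_empty] at hpos
    exact lt_irrefl _ hpos
  have h1 := key (Set.Ioi 0) measurableSet_Ioi (by
    intro t ht h; simp only [Set.mem_Ioi] at *; linarith)
  have h2 := key (Set.Iio 0) measurableSet_Iio (by
    intro t ht h; simp only [Set.mem_Iio] at *; linarith)
  rw [ae_iff]
  refine measure_mono_null ?_ (measure_union_null h1 h2)
  intro u hu
  rcases lt_or_gt_of_ne hu with h | h
  · exact Or.inr h
  · exact Or.inl h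
end
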